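/- Let n ≥ 5 and 2 ≤ k ≤ n−2 be integers, and let S = { ρ ∈ D_n : ρ·C^ch_{k,n} = C^ch_{k,n} } be the stabilizer of the checkboard collection. Then: if k and n are both even, S is the cyclic subgroup generated by σ^{n/2}; if k is odd and n is even, S is the subgroup generated by σ^{n/2} and the reflection ρ₀(x) = (k−1)(n−1)/2 − x; and if n is odd, S is the subgroup generated by the reflection ρ₀(x) = (k−1)(n−1)/2 − x (in the last two cases (k−1)(n−1) is even, so ρ₀ is well defined). -/

import Mathlib

open Finset

/-- `(a,b,c,d)` is strictly cyclically ordered in `ℤ/nℤ`. -/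
def StrictCyclicOrd {n : ℕ} (a b c d : ZMod n) : Prop :=
  0 < (b - a).val ∧ (b - a).val < (c - a).val ∧ (c - a).val < (d - a).val

/-- `I` and `J` are weakly separated subsets of `ℤ/nℤ`. -/
def WeaklySep {n : ℕ} (I J : Finset (ZMod n)) : Prop :=
  ¬ ∃ a c b d : ZMod n, a ∈ I \ J ∧ c ∈ I \ J ∧ b ∈ J \ I ∧ d ∈ J \ I ∧
      StrictCyclicOrd a b c d

/-- The dihedral group `D_n`, realized as the subgroup of permutations of `ℤ/nℤ`
generated by `σ : i ↦ i + 1` and `τ : i ↦ 2 - i`. -/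
def dihedral (n : ℕ) : Subgroup (Equiv.Perm (ZMod n)) :=
  Subgroup.closure {Equiv.addRight (1 : ZMod n), Equiv.subLeft (2 : ZMod n)}

/-- The set `[m] = {1, …, m} ⊆ ℤ/nℤ` (with `[0] = ∅`). -/
def seg (n m : ℕ) : Finset (ZMod n) := (Finset.Icc 1 m).image (fun t : ℕ => (t : ZMod n))

/-- Rectangle label `I^rec_{i,j} = ([i+j]∖[i]) ∪ ([n]∖[n−k+j])`. -/
def Irec (k n i j : ℕ) : Finset (ZMod n) :=
  (seg n (i + j) \ seg n i) ∪ (seg n n \ seg n (n - k + j))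

/-- Checkboard label `I^ch_{i,j} = σ^{−⌈(i+j)/2⌉} I^rec_{i,j}`. -/
def Ich (k n i j : ℕ) : Finset (ZMod n) :=
  (Irec k n i j).image (fun x => x - (((i + j + 1) / 2 : ℕ) : ZMod n))

/-- Dual rectangle label `Î^rec_{i,j} = [i] ∪ ([k+j]∖[i+j])`. -/
def Drec (k n i j : ℕ) : Finset (ZMod n) :=
  seg n i ∪ (seg n (k + j) \ seg n (i + j))

/-- Dual checkboard label `Î^ch_{i,j} = σ^{−⌈(i+j)/2⌉} Î^rec_{i,j}`. -/
def Dch (k n i j : ℕ) : Finset (ZMod n) :=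
  (Drec k n i j).image (fun x => x - (((i + j + 1) / 2 : ℕ) : ZMod n))

/-- The rectangle collection `C^rec_{k,n}`. -/
def Crec (k n : ℕ) : Finset (Finset (ZMod n)) :=
  ((Finset.range (n - k + 1)) ×ˢ (Finset.range (k + 1))).image (fun p => Irec k n p.1 p.2)

/-- The checkboard collection `C^ch_{k,n}`. -/
def Cch (k n : ℕ) : Finset (Finset (ZMod n)) :=
  ((Finset.range (n - k + 1)) ×ˢ (Finset.range (k + 1))).image (fun p => Ich k n p.1 p.2)

/-- The dual rectangle collection `Ĉ^rec_{k,n}`. -/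
def CDrec (k n : ℕ) : Finset (Finset (ZMod n)) :=
  ((Finset.range (k + 1)) ×ˢ (Finset.range (n - k + 1))).image (fun p => Drec k n p.1 p.2)

/-- The dual checkboard collection `Ĉ^ch_{k,n}`. -/
def CDch (k n : ℕ) : Finset (Finset (ZMod n)) :=
  ((Finset.range (k + 1)) ×ˢ (Finset.range (n - k + 1))).image (fun p => Dch k n p.1 p.2)

/-- `C` is a weakly separated collection of `k`-subsets of `ℤ/nℤ`. -/
def IsWSColl (n k : ℕ) (C : Set (Finset (ZMod n))) : Prop :=
  (∀ I ∈ C, I.card = k) ∧ ∀ I ∈ C, ∀ J ∈ C, WeaklySep I J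

/-- `C` is a maximal weakly separated collection of `k`-subsets of `ℤ/nℤ`. -/
def IsMaxWSColl (n k : ℕ) (C : Set (Finset (ZMod n))) : Prop :=
  IsWSColl n k C ∧ ∀ C' : Set (Finset (ZMod n)), IsWSColl n k C' → C ⊆ C' → C' = C

/-!
A label is the union of at most two cyclic intervals. For `Irec k n i j` their last elements are
`i + j` and `0`, so for `Ich k n i j` they sum to `i + j - 2⌈(i + j)/2⌉ ∈ {0, -1}`, according to
the parity of `i + j`, as long as there really are two intervals. Comparing this sum before and
after applying a symmetry to one label with `i + j` even and one with `i + j` odd forces `2r = 0`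
for a translation `x ↦ x + r` and `2c = 1 - k` for a reflection `x ↦ c - x`.

Conversely `x ↦ i + 1 - x` and `x ↦ j + 1 - k - x` turn the rectangle label `(i, j)` into
`(i, k - j)` and `(n - k - i, j)`. After the checkboard shift the reflection no longer depends on
`(i, j)` when `k`, respectively `n - k`, is odd, and neither does their composite when `n` is even.
-/

section Permutations

variable {G : Type*} [AddCommGroup G] (a b : G)

lemma addRight_mul_subLeft : Equiv.addRight a * Equiv.subLeft b = Equiv.subLeft (a + b) := by
  ext x
  simp only [Equiv.Perm.mul_apply, Equiv.coe_addRight, Equiv.subLeft_apply]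
  abel

lemma subLeft_mul_addRight : Equiv.subLeft a * Equiv.addRight b = Equiv.subLeft (a - b) := by
  ext x
  simp only [Equiv.Perm.mul_apply, Equiv.coe_addRight, Equiv.subLeft_apply]
  abel

lemma subLeft_mul_subLeft : Equiv.subLeft a * Equiv.subLeft b = Equiv.addRight (a - b) := by
  ext x
  simp only [Equiv.Perm.mul_apply, Equiv.coe_addRight, Equiv.subLeft_apply]
  abel

lemma addRight_mul_addRight : Equiv.addRight a * Equiv.addRight b = Equiv.addRight (a + b) := by
  rw [add_comm, Equiv.addRight_add]

lemma inv_subLeft : (Equiv.subLeft a)⁻¹ = Equiv.subLeft a :=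
  Equiv.symm_subLeft a

end Permutations

section Dihedral

variable {n : ℕ}

lemma addRight_one_pow (m : ℕ) :
    Equiv.addRight (1 : ZMod n) ^ m = Equiv.addRight (m : ZMod n) := by
  rw [Equiv.nsmul_addRight, nsmul_one]

lemma addRight_mem_dihedral (r : ZMod n) : Equiv.addRight r ∈ dihedral n := by
  obtain ⟨m, rfl⟩ := ZMod.intCast_surjective r
  rw [← zsmul_one m, ← Equiv.zsmul_addRight]
  exact zpow_mem (Subgroup.subset_closure (by simp)) m

lemma subLeft_mem_dihedral (c : ZMod n) : Equiv.subLeft c ∈ dihedral n := by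
  rw [← sub_add_cancel c 2, ← addRight_mul_subLeft]
  exact mul_mem (addRight_mem_dihedral _) (Subgroup.subset_closure (by simp))

lemma mem_dihedral_iff {ρ : Equiv.Perm (ZMod n)} :
    ρ ∈ dihedral n ↔ (∃ r, ρ = Equiv.addRight r) ∨ ∃ c, ρ = Equiv.subLeft c := by
  constructor
  · intro hρ
    induction hρ using Subgroup.closure_induction with
    | mem ρ hρ =>
      rcases hρ with rfl | rfl
      · exact .inl ⟨_, rfl⟩
      · exact .inr ⟨_, rfl⟩
    | one => exact .inl ⟨0, Equiv.addRight_zero.symm⟩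
    | mul ρ ρ' _ _ hρ hρ' =>
      rcases hρ with ⟨a, rfl⟩ | ⟨a, rfl⟩ <;> rcases hρ' with ⟨b, rfl⟩ | ⟨b, rfl⟩
      · exact .inl ⟨_, addRight_mul_addRight a b⟩
      · exact .inr ⟨_, addRight_mul_subLeft a b⟩
      · exact .inr ⟨_, subLeft_mul_addRight a b⟩
      · exact .inl ⟨_, subLeft_mul_subLeft a b⟩
    | inv ρ _ hρ =>
      rcases hρ with ⟨a, rfl⟩ | ⟨a, rfl⟩
      · exact .inl ⟨_, Equiv.neg_addRight a⟩
      · exact .inr ⟨_, inv_subLeft a⟩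
  · rintro (⟨r, rfl⟩ | ⟨c, rfl⟩)
    · exact addRight_mem_dihedral r
    · exact subLeft_mem_dihedral c

end Dihedral

section Arithmetic

variable {n k : ℕ}

lemma natCast_injOn_Icc_one (n : ℕ) : Set.InjOn (Nat.cast : ℕ → ZMod n) (Set.Icc 1 n) := by
  intro a ⟨ha, ha'⟩ b ⟨hb, hb'⟩ hab
  exact ((ZMod.natCast_eq_natCast_iff a b n).1 hab).eq_of_abs_lt (by rw [abs_lt]; omega)

lemma eq_zero_or_eq_half_of_two_mul_eq_zero [NeZero n] {r : ZMod n} (hr : 2 * r = 0) :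
    r = 0 ∨ r = (n / 2 : ℕ) := by
  have hneg : -r = r := by linear_combination -hr
  refine ((ZMod.neg_eq_self_iff r).1 hneg).imp_right fun hval => ?_
  rw [← ZMod.natCast_zmod_val r]
  congr 1
  omega

lemma eq_of_two_mul_eq_two_mul (hn : Odd n) {a b : ZMod n} (hab : 2 * a = 2 * b) : a = b :=
  sub_eq_zero.1 <| (ZMod.add_self_eq_zero_iff_eq_zero hn).1 (by linear_combination hab)

lemma two_mul_ne_one_sub_of_even (hn : Even n) (hk : Even k) (c : ZMod n) : 2 * c ≠ 1 - k := by
  intro hc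
  have hc₂ := congrArg (ZMod.castHom hn.two_dvd (ZMod 2)) hc
  have hk₂ : (k : ZMod 2) = 0 := (ZMod.natCast_eq_zero_iff k 2).2 hk.two_dvd
  have h2 : (2 : ZMod 2) = 0 := rfl
  simp only [map_mul, map_sub, map_one, map_ofNat, map_natCast, hk₂, h2, zero_mul, sub_zero] at hc₂
  exact zero_ne_one hc₂

lemma two_mul_natCast_half_mul (hn : 1 ≤ n) (hk : 1 ≤ k) (h : Even ((k - 1) * (n - 1))) :
    2 * (((k - 1) * (n - 1) / 2 : ℕ) : ZMod n) = 1 - k := by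
  have hcast := congrArg (Nat.cast : ℕ → ZMod n) (Nat.two_mul_div_two_of_even h)
  push_cast [hn, hk] at hcast ⊢
  rw [hcast, ZMod.natCast_self]
  ring

lemma natCast_half_mul_eq_neg_half (hn : 1 ≤ n) (hk : Odd k) :
    (((k - 1) * (n - 1) / 2 : ℕ) : ZMod n) = -(k / 2 : ℕ) := by
  obtain ⟨m, rfl⟩ := hk
  rw [Nat.add_sub_cancel, mul_assoc, Nat.mul_div_cancel_left _ two_pos,
    show (2 * m + 1) / 2 = m by omega, Nat.cast_mul, Nat.cast_sub hn, ZMod.natCast_self]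
  ring

lemma natCast_half_mul_eq_neg_sub_half (hk : 1 ≤ k) (hkn : k ≤ n) (hn : Odd n)
    (hnk : Odd (n - k)) :
    (((k - 1) * (n - 1) / 2 : ℕ) : ZMod n) = -k - ((n - k) / 2 : ℕ) := by
  have heven : Even ((k - 1) * (n - 1)) := (Nat.Odd.sub_odd hn odd_one).mul_left _
  have hhalf := congrArg (Nat.cast : ℕ → ZMod n) (Nat.two_mul_div_two_add_one_of_odd hnk)
  push_cast [hkn] at hhalf
  rw [ZMod.natCast_self] at hhalf
  refine eq_of_two_mul_eq_two_mul hn ?_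
  rw [two_mul_natCast_half_mul (hk.trans hkn) hk heven]
  linear_combination hhalf

lemma two_mul_natCast_ceil_half (d : ℕ) :
    2 * (((d + 1) / 2 : ℕ) : ZMod n) = d + (d % 2 : ℕ) := by
  exact_mod_cast congrArg (Nat.cast : ℕ → ZMod n) (show 2 * ((d + 1) / 2) = d + d % 2 by omega)

lemma two_ne_zero_of_two_lt (hn : 2 < n) : (2 : ZMod n) ≠ 0 := fun h =>
  hn.not_ge <| Nat.le_of_dvd two_pos <| (ZMod.natCast_eq_zero_iff 2 n).1 (mod_cast h)

lemma eq_neg_one_of_add_one_mem {R : Type*} [Ring R] (h2 : (2 : R) ≠ 0) {u : R}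
    (hu : u = 0 ∨ u = -1) (hu' : u + 1 = 0 ∨ u + 1 = -1) : u = -1 := by
  refine hu.resolve_left fun h => hu'.elim (fun h' => ?_) fun h' => ?_ <;> subst h
  · exact h2 (by rw [← one_add_one_eq_two, ← zero_add (1 : R), h', add_zero])
  · exact h2 (by rw [← one_add_one_eq_two, ← eq_neg_iff_add_eq_zero, ← h', zero_add])

end Arithmetic

open scoped Pointwise

section Arcs

variable {n : ℕ}

/-- The cyclic interval `{a + 1, …, a + l}` of `ℤ/nℤ`, so that `seg n m` is `arc 0 m`. -/
def arc (a : ZMod n) (l : ℕ) : Finset (ZMod n) :=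
  (Icc 1 l).image fun t : ℕ => a + t

/-- The last elements of the maximal cyclic intervals contained in `I`. -/
def arcEnds (I : Finset (ZMod n)) : Finset (ZMod n) :=
  {x ∈ I | x + 1 ∉ I}

lemma mem_arcEnds {I : Finset (ZMod n)} {x : ZMod n} : x ∈ arcEnds I ↔ x ∈ I ∧ x + 1 ∉ I :=
  mem_filter

lemma seg_sdiff_seg {a b : ℕ} (hab : a ≤ b) (hb : b ≤ n) :
    seg n b \ seg n a = arc (a : ZMod n) (b - a) := by
  have hinj : Set.InjOn (Nat.cast : ℕ → ZMod n) (Icc 1 b) :=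
    (natCast_injOn_Icc_one n).mono (coe_Icc 1 b ▸ Set.Icc_subset_Icc_right hb)
  rw [seg, seg, ← image_sdiff_of_injOn hinj (Icc_subset_Icc_right hab)]
  have hIcc : Icc 1 b \ Icc 1 a = (Icc 1 (b - a)).image (a + ·) := by
    rw [image_add_left_Icc, Nat.add_sub_cancel' hab]
    ext t
    simp only [mem_sdiff, mem_Icc]
    omega
  simp only [hIcc, arc, image_image, Function.comp_def, Nat.cast_add]

lemma subLeft_smul_arc (c a : ZMod n) (l : ℕ) :
    Equiv.subLeft c • arc a l = arc (c - a - (l : ZMod n) - 1) l := by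
  have hreflect : (Icc 1 l).image (l + 1 - ·) = Icc 1 l := by
    ext t
    simp only [mem_image, mem_Icc]
    exact ⟨by rintro ⟨u, hu, rfl⟩; omega, fun ht => ⟨l + 1 - t, by omega, by omega⟩⟩
  rw [arc, arc, ← hreflect, smul_finset_def, image_image, image_image, hreflect]
  refine image_congr fun t ht => ?_
  rw [coe_Icc, Set.mem_Icc] at ht
  simp only [Function.comp_apply, Equiv.Perm.smul_def, Equiv.subLeft_apply,
    Nat.cast_sub (show t ≤ l + 1 by omega)]
  push_cast
  ring

lemma arcEnds_union_subset (I J : Finset (ZMod n)) : arcEnds (I ∪ J) ⊆ arcEnds I ∪ arcEnds J := by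
  intro x
  simp only [mem_union, mem_arcEnds]
  tauto

lemma arcEnds_arc_subset (a : ZMod n) (l : ℕ) : arcEnds (arc a l) ⊆ {a + l} := by
  intro x hx
  obtain ⟨hmem, hsucc⟩ := mem_arcEnds.1 hx
  obtain ⟨t, ht, rfl⟩ := mem_image.1 hmem
  rw [mem_Icc] at ht
  have htl : ¬ t + 1 ≤ l := fun h =>
    hsucc (mem_image.2 ⟨t + 1, mem_Icc.2 ⟨by omega, h⟩, by push_cast; ring⟩)
  rw [mem_singleton, show t = l by omega]

lemma arcEnds_addRight_smul (r : ZMod n) (I : Finset (ZMod n)) :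
    arcEnds (Equiv.addRight r • I) = Equiv.addRight r • arcEnds I := by
  ext x
  simp only [mem_arcEnds, ← inv_smul_mem_iff, Equiv.neg_addRight, Equiv.Perm.smul_def,
    Equiv.coe_addRight, add_right_comm]

lemma sum_addRight_smul (r : ZMod n) (I : Finset (ZMod n)) :
    ∑ x ∈ Equiv.addRight r • I, x = ∑ x ∈ I, x + #I * r := by
  rw [smul_finset_def, sum_image (MulAction.injective _).injOn]
  simp only [Equiv.Perm.smul_def, Equiv.coe_addRight, sum_add_distrib, sum_const, nsmul_eq_mul]

end Arcs

section Labels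

variable {n k i j : ℕ}

lemma natCast_mem_seg {m t : ℕ} (ht : t ∈ Icc 1 n) (hm : m ≤ n) :
    (t : ZMod n) ∈ seg n m ↔ t ≤ m := by
  simp only [seg, mem_image, mem_Icc] at ht ⊢
  refine ⟨?_, fun h => ⟨t, ⟨ht.1, h⟩, rfl⟩⟩
  rintro ⟨u, hu, hut⟩
  exact natCast_injOn_Icc_one n ⟨hu.1, hu.2.trans hm⟩ ht hut ▸ hu.2

lemma natCast_mem_Irec {t : ℕ} (hi : i + k ≤ n) (hj : j ≤ k) (ht : t ∈ Icc 1 n) :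
    (t : ZMod n) ∈ Irec k n i j ↔ (i < t ∧ t ≤ i + j) ∨ n - k + j < t := by
  have htn := (mem_Icc.1 ht).2
  rw [Irec, mem_union, mem_sdiff, mem_sdiff, natCast_mem_seg ht (by omega),
    natCast_mem_seg ht (by omega), natCast_mem_seg ht le_rfl, natCast_mem_seg ht (by omega)]
  omega

lemma Irec_eq_arc_union_arc (hi : i + k ≤ n) (hj : j ≤ k) :
    Irec k n i j = arc (i : ZMod n) j ∪ arc (j - k : ZMod n) (k - j) := by
  rw [Irec, seg_sdiff_seg (by omega) (by omega), seg_sdiff_seg (by omega) le_rfl,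
    Nat.add_sub_cancel_left, show n - (n - k + j) = k - j by omega]
  push_cast [show k ≤ n by omega]
  rw [ZMod.natCast_self, zero_sub, neg_add_eq_sub]

lemma subLeft_smul_Irec_eq_flip_right (hi : i + k ≤ n) (hj : j ≤ k) :
    Equiv.subLeft (i + 1 : ZMod n) • Irec k n i j = Irec k n i (k - j) := by
  rw [Irec_eq_arc_union_arc hi hj, Irec_eq_arc_union_arc hi (Nat.sub_le k j), smul_finset_union,
    subLeft_smul_arc, subLeft_smul_arc, union_comm, Nat.sub_sub_self hj, Nat.cast_sub hj]
  congr 2 <;> ring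

lemma subLeft_smul_Irec_eq_flip_left (hi : i + k ≤ n) (hj : j ≤ k) :
    Equiv.subLeft (j + 1 - k : ZMod n) • Irec k n i j = Irec k n (n - k - i) j := by
  rw [Irec_eq_arc_union_arc hi hj, Irec_eq_arc_union_arc (by omega) hj, smul_finset_union,
    subLeft_smul_arc, subLeft_smul_arc, Nat.cast_sub hj, Nat.cast_sub (by omega : i ≤ n - k),
    Nat.cast_sub (by omega : k ≤ n), ZMod.natCast_self]
  congr 2 <;> ring

lemma addRight_smul_Irec_eq_flip_both (hi : i + k ≤ n) (hj : j ≤ k) :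
    Equiv.addRight (-(i + j) : ZMod n) • Irec k n i j = Irec k n (n - k - i) (k - j) := by
  rw [← subLeft_smul_Irec_eq_flip_left hi (Nat.sub_le k j), ← subLeft_smul_Irec_eq_flip_right hi hj,
    smul_smul, subLeft_mul_subLeft, Nat.cast_sub hj]
  congr 2
  ring

lemma arcEnds_Irec_subset (hi : i + k ≤ n) (hj : j ≤ k) :
    arcEnds (Irec k n i j) ⊆ {(i + j : ZMod n), 0} := by
  rw [Irec_eq_arc_union_arc hi hj, insert_eq]
  refine (arcEnds_union_subset _ _).trans
    (union_subset_union (arcEnds_arc_subset _ _) ((arcEnds_arc_subset _ _).trans ?_))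
  rw [Nat.cast_sub hj, sub_add_sub_cancel', sub_self]

lemma sum_arcEnds_Irec (hi : i + k ≤ n) (hj : j ≤ k) (hcard : #(arcEnds (Irec k n i j)) = 2) :
    ∑ x ∈ arcEnds (Irec k n i j), x = i + j := by
  have hends : arcEnds (Irec k n i j) = {(i + j : ZMod n), 0} :=
    eq_of_subset_of_card_le (arcEnds_Irec_subset hi hj) (hcard ▸ card_le_two)
  have hne : (i + j : ZMod n) ≠ 0 := by
    rw [hends] at hcard
    exact card_pair_eq_two_iff.1 hcard
  rw [hends, sum_pair hne, add_zero]

lemma card_arcEnds_Irec (hi₀ : 0 < i) (hi : i + k < n) (hj₀ : 0 < j) (hj : j < k) :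
    #(arcEnds (Irec k n i j)) = 2 := by
  have mem_iff {t : ℕ} (ht : t ∈ Icc 1 n) := natCast_mem_Irec hi.le hj.le ht
  have hsum : ((i + j : ℕ) : ZMod n) ∈ arcEnds (Irec k n i j) := by
    rw [mem_arcEnds, ← Nat.cast_succ, mem_iff (mem_Icc.2 (by omega)),
      mem_iff (mem_Icc.2 (by omega))]
    omega
  have hzero : ((n : ℕ) : ZMod n) ∈ arcEnds (Irec k n i j) := by
    rw [mem_arcEnds, ZMod.natCast_self, zero_add, ← ZMod.natCast_self n, ← Nat.cast_one,
      mem_iff (mem_Icc.2 (by omega)), mem_iff (mem_Icc.2 (by omega))]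
    omega
  have hne : ((i + j : ℕ) : ZMod n) ≠ (n : ℕ) := fun h => by
    have := natCast_injOn_Icc_one n ⟨by omega, by omega⟩ ⟨by omega, le_rfl⟩ h
    omega
  refine le_antisymm ((card_le_card (arcEnds_Irec_subset hi.le hj.le)).trans card_le_two) ?_
  exact Nat.succ_le_of_lt (one_lt_card.2 ⟨_, hsum, _, hzero, hne⟩)

end Labels

section Checkboard

variable {n k i j : ℕ}

lemma Ich_eq_addRight_smul_Irec :
    Ich k n i j = Equiv.addRight (-(((i + j + 1) / 2 : ℕ) : ZMod n)) • Irec k n i j := by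
  simp only [Ich, smul_finset_def, Equiv.Perm.smul_def, Equiv.coe_addRight, sub_eq_add_neg]

lemma mem_Cch_iff (hkn : k ≤ n) {I : Finset (ZMod n)} :
    I ∈ Cch k n ↔ ∃ i j, i + k ≤ n ∧ j ≤ k ∧ Ich k n i j = I := by
  simp only [Cch, mem_image, mem_product, mem_range, Prod.exists, and_assoc,
    Nat.lt_succ_iff, Nat.le_sub_iff_add_le hkn]

lemma Ich_mem_Cch (hi : i + k ≤ n) (hj : j ≤ k) : Ich k n i j ∈ Cch k n :=
  (mem_Cch_iff (by omega)).2 ⟨i, j, hi, hj, rfl⟩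

lemma addRight_smul_Ich_eq_flip_both (hn : Even n) (hi : i + k ≤ n) (hj : j ≤ k) :
    Equiv.addRight ((n / 2 : ℕ) : ZMod n) • Ich k n i j = Ich k n (n - k - i) (k - j) := by
  have hshift : n / 2 + (n - k - i + (k - j) + 1) / 2 + (i + j) = (i + j + 1) / 2 + n := by
    obtain ⟨p, rfl⟩ := hn
    omega
  have hcast := congrArg (Nat.cast : ℕ → ZMod n) hshift
  rw [Nat.cast_add _ n, ZMod.natCast_self] at hcast
  rw [Ich_eq_addRight_smul_Irec, Ich_eq_addRight_smul_Irec,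
    ← addRight_smul_Irec_eq_flip_both hi hj, smul_smul, smul_smul, addRight_mul_addRight,
    addRight_mul_addRight]
  congr 2
  simp only [Nat.cast_add] at hcast
  linear_combination hcast

lemma subLeft_smul_Ich_eq_flip_right (hk : Odd k) (hi : i + k ≤ n) (hj : j ≤ k) :
    Equiv.subLeft (-(k / 2 : ℕ) : ZMod n) • Ich k n i j = Ich k n i (k - j) := by
  have hshift : (i + j + 1) / 2 + (i + (k - j) + 1) / 2 = i + 1 + k / 2 := by
    obtain ⟨m, rfl⟩ := hk
    omega
  have hcast := congrArg (Nat.cast : ℕ → ZMod n) hshift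
  rw [Ich_eq_addRight_smul_Irec, Ich_eq_addRight_smul_Irec,
    ← subLeft_smul_Irec_eq_flip_right hi hj, smul_smul, smul_smul, subLeft_mul_addRight,
    addRight_mul_subLeft]
  congr 2
  simp only [Nat.cast_add, Nat.cast_one] at hcast
  linear_combination hcast

lemma subLeft_smul_Ich_eq_flip_left (hnk : Odd (n - k)) (hi : i + k ≤ n) (hj : j ≤ k) :
    Equiv.subLeft (-k - ((n - k) / 2 : ℕ) : ZMod n) • Ich k n i j = Ich k n (n - k - i) j := by
  have hshift : (i + j + 1) / 2 + (n - k - i + j + 1) / 2 = j + 1 + (n - k) / 2 := by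
    obtain ⟨m, hm⟩ := hnk
    omega
  have hcast := congrArg (Nat.cast : ℕ → ZMod n) hshift
  rw [Ich_eq_addRight_smul_Irec, Ich_eq_addRight_smul_Irec,
    ← subLeft_smul_Irec_eq_flip_left hi hj, smul_smul, smul_smul, subLeft_mul_addRight,
    addRight_mul_subLeft]
  congr 2
  simp only [Nat.cast_add, Nat.cast_one] at hcast
  linear_combination hcast

lemma sum_arcEnds_of_mem_Cch (hkn : k ≤ n) {I : Finset (ZMod n)} (hI : I ∈ Cch k n)
    (hcard : #(arcEnds I) = 2) : ∑ x ∈ arcEnds I, x = 0 ∨ ∑ x ∈ arcEnds I, x = -1 := by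
  obtain ⟨i, j, hi, hj, rfl⟩ := (mem_Cch_iff hkn).1 hI
  rw [Ich_eq_addRight_smul_Irec, arcEnds_addRight_smul] at hcard ⊢
  rw [card_smul_finset] at hcard
  have hsum : ∑ x ∈ Equiv.addRight (-(((i + j + 1) / 2 : ℕ) : ZMod n)) • arcEnds (Irec k n i j), x
      = -((i + j) % 2 : ℕ) := by
    rw [sum_addRight_smul, sum_arcEnds_Irec hi hj hcard, hcard]
    have hceil := two_mul_natCast_ceil_half (n := n) (i + j)
    rw [Nat.cast_add] at hceil
    linear_combination -hceil
  rw [hsum]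
  rcases Nat.mod_two_eq_zero_or_one (i + j) with h | h <;> simp [h]

end Checkboard

section Stabilizer

variable {n k : ℕ}

/-- The subgroup of `D_n` fixing the checkboard collection under the pointwise action. -/
def checkboardStabilizer (k n : ℕ) : Subgroup (Equiv.Perm (ZMod n)) :=
  dihedral n ⊓ MulAction.stabilizer (Equiv.Perm (ZMod n)) (Cch k n)

lemma coe_checkboardStabilizer (k n : ℕ) :
    (checkboardStabilizer k n : Set (Equiv.Perm (ZMod n))) =
      {ρ | ρ ∈ dihedral n ∧ (Cch k n).image (fun I => I.image ρ) = Cch k n} :=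
  rfl

lemma mem_checkboardStabilizer_of_smul_Ich_mem {ρ : Equiv.Perm (ZMod n)} (hkn : k ≤ n)
    (hρ : ρ ∈ dihedral n) (h : ∀ i j, i + k ≤ n → j ≤ k → ρ • Ich k n i j ∈ Cch k n) :
    ρ ∈ checkboardStabilizer k n := by
  refine ⟨hρ, MulAction.mem_stabilizer_finset'.2 fun I hI => ?_⟩
  obtain ⟨i, j, hi, hj, rfl⟩ := (mem_Cch_iff hkn).1 hI
  exact h i j hi hj

lemma smul_Ich_mem_Cch {ρ : Equiv.Perm (ZMod n)} {i j : ℕ} (hρ : ρ ∈ checkboardStabilizer k n)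
    (hi : i + k ≤ n) (hj : j ≤ k) : ρ • Ich k n i j ∈ Cch k n :=
  MulAction.mem_stabilizer_finset'.1 hρ.2 (Ich_mem_Cch hi hj)

lemma addRight_half_mem_checkboardStabilizer (hkn : k ≤ n) (hn : Even n) :
    Equiv.addRight ((n / 2 : ℕ) : ZMod n) ∈ checkboardStabilizer k n := by
  refine mem_checkboardStabilizer_of_smul_Ich_mem hkn (addRight_mem_dihedral _) fun i j hi hj => ?_
  rw [addRight_smul_Ich_eq_flip_both hn hi hj]
  exact Ich_mem_Cch (by omega) (Nat.sub_le k j)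

lemma subLeft_mem_checkboardStabilizer_of_odd (hkn : k ≤ n) (hk : Odd k) :
    Equiv.subLeft (-(k / 2 : ℕ) : ZMod n) ∈ checkboardStabilizer k n := by
  refine mem_checkboardStabilizer_of_smul_Ich_mem hkn (subLeft_mem_dihedral _) fun i j hi hj => ?_
  rw [subLeft_smul_Ich_eq_flip_right hk hi hj]
  exact Ich_mem_Cch hi (Nat.sub_le k j)

lemma subLeft_mem_checkboardStabilizer_of_odd_sub (hkn : k ≤ n) (hnk : Odd (n - k)) :
    Equiv.subLeft (-k - ((n - k) / 2 : ℕ) : ZMod n) ∈ checkboardStabilizer k n := by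
  refine mem_checkboardStabilizer_of_smul_Ich_mem hkn (subLeft_mem_dihedral _) fun i j hi hj => ?_
  rw [subLeft_smul_Ich_eq_flip_left hnk hi hj]
  exact Ich_mem_Cch (by omega) hj

lemma subLeft_half_mem_checkboardStabilizer (hk : 1 ≤ k) (hkn : k ≤ n) (h : Odd k ∨ Odd n) :
    Equiv.subLeft (((k - 1) * (n - 1) / 2 : ℕ) : ZMod n) ∈ checkboardStabilizer k n := by
  by_cases hkodd : Odd k
  · rw [natCast_half_mul_eq_neg_half (hk.trans hkn) hkodd]
    exact subLeft_mem_checkboardStabilizer_of_odd hkn hkodd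
  · have hn : Odd n := h.resolve_left hkodd
    have hnk : Odd (n - k) := Nat.Odd.sub_even hkn hn (Nat.not_odd_iff_even.1 hkodd)
    rw [natCast_half_mul_eq_neg_sub_half hk hkn hn hnk]
    exact subLeft_mem_checkboardStabilizer_of_odd_sub hkn hnk

lemma add_add_two_mul_of_addRight_smul_Irec_mem_Cch {i j : ℕ} (hi₀ : 0 < i) (hi : i + k < n)
    (hj₀ : 0 < j) (hj : j < k) {t : ZMod n} (ht : Equiv.addRight t • Irec k n i j ∈ Cch k n) :
    i + j + 2 * t = 0 ∨ i + j + 2 * t = -1 := by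
  have hcard := card_arcEnds_Irec hi₀ hi hj₀ hj
  have hsum : ∑ x ∈ arcEnds (Equiv.addRight t • Irec k n i j), x = i + j + 2 * t := by
    rw [arcEnds_addRight_smul, sum_addRight_smul, sum_arcEnds_Irec hi.le hj.le hcard, hcard,
      Nat.cast_ofNat]
  rw [← hsum]
  refine sum_arcEnds_of_mem_Cch (by omega) ht ?_
  rw [arcEnds_addRight_smul, card_smul_finset, hcard]

lemma two_mul_sub_parity_of_addRight_mem {i j : ℕ} (hi₀ : 0 < i) (hi : i + k < n) (hj₀ : 0 < j)
    (hj : j < k) {r : ZMod n} (hr : Equiv.addRight r ∈ checkboardStabilizer k n) :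
    2 * r - ((i + j) % 2 : ℕ) = 0 ∨ 2 * r - ((i + j) % 2 : ℕ) = -1 := by
  have hmem := smul_Ich_mem_Cch hr hi.le hj.le
  rw [Ich_eq_addRight_smul_Irec, smul_smul, addRight_mul_addRight] at hmem
  have hceil := two_mul_natCast_ceil_half (n := n) (i + j)
  rw [Nat.cast_add] at hceil
  convert add_add_two_mul_of_addRight_smul_Irec_mem_Cch hi₀ hi hj₀ hj hmem using 2 <;>
    linear_combination hceil

lemma two_mul_add_parity_of_subLeft_mem {i j : ℕ} (hi₀ : 0 < i) (hi : i + k < n) (hj₀ : 0 < j)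
    (hj : j < k) {c : ZMod n} (hc : Equiv.subLeft c ∈ checkboardStabilizer k n) :
    2 * c - 2 + k + ((i + j) % 2 : ℕ) = 0 ∨ 2 * c - 2 + k + ((i + j) % 2 : ℕ) = -1 := by
  have hmem := smul_Ich_mem_Cch hc hi.le hj.le
  have hflip := subLeft_smul_Irec_eq_flip_right hi.le (Nat.sub_le k j)
  rw [Nat.sub_sub_self hj.le] at hflip
  rw [Ich_eq_addRight_smul_Irec, ← hflip, smul_smul, smul_smul, subLeft_mul_addRight,
    subLeft_mul_subLeft] at hmem
  have hceil := two_mul_natCast_ceil_half (n := n) (i + j)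
  rw [Nat.cast_add] at hceil
  convert add_add_two_mul_of_addRight_smul_Irec_mem_Cch hi₀ hi (by omega) (by omega) hmem
    using 2 <;> rw [Nat.cast_sub hj.le] <;> linear_combination -hceil

lemma exists_interior_add_odd (hn : 5 ≤ n) (hk : 2 ≤ k) (hkn : k + 2 ≤ n) :
    ∃ i j, 0 < i ∧ i + k < n ∧ 0 < j ∧ j < k ∧ (i + j) % 2 = 1 := by
  rcases hk.eq_or_lt with rfl | hk
  · exact ⟨2, 1, by omega⟩
  · exact ⟨1, 2, by omega⟩

lemma two_mul_eq_zero_of_addRight_mem (hn : 5 ≤ n) (hk : 2 ≤ k) (hkn : k + 2 ≤ n) {r : ZMod n}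
    (hr : Equiv.addRight r ∈ checkboardStabilizer k n) : 2 * r = 0 := by
  obtain ⟨i, j, hi₀, hi, hj₀, hj, hij⟩ := exists_interior_add_odd hn hk hkn
  have heven := two_mul_sub_parity_of_addRight_mem one_pos (by omega) one_pos (by omega) hr
  have hodd := two_mul_sub_parity_of_addRight_mem hi₀ hi hj₀ hj hr
  rw [hij, Nat.cast_one] at hodd
  rw [one_add_one_eq_two, Nat.mod_self, Nat.cast_zero, sub_zero,
    ← sub_add_cancel (2 * r) 1] at heven
  linear_combination eq_neg_one_of_add_one_mem (two_ne_zero_of_two_lt (by omega)) hodd heven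

lemma two_mul_eq_one_sub_of_subLeft_mem (hn : 5 ≤ n) (hk : 2 ≤ k) (hkn : k + 2 ≤ n) {c : ZMod n}
    (hc : Equiv.subLeft c ∈ checkboardStabilizer k n) : 2 * c = 1 - k := by
  obtain ⟨i, j, hi₀, hi, hj₀, hj, hij⟩ := exists_interior_add_odd hn hk hkn
  have heven := two_mul_add_parity_of_subLeft_mem one_pos (by omega) one_pos (by omega) hc
  have hodd := two_mul_add_parity_of_subLeft_mem hi₀ hi hj₀ hj hc
  rw [hij, Nat.cast_one] at hodd
  rw [one_add_one_eq_two, Nat.mod_self, Nat.cast_zero, add_zero] at heven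
  linear_combination eq_neg_one_of_add_one_mem (two_ne_zero_of_two_lt (by omega)) heven hodd

lemma checkboardStabilizer_le (hn : 5 ≤ n) (hk : 2 ≤ k) (hkn : k + 2 ≤ n)
    {H : Subgroup (Equiv.Perm (ZMod n))} (hrot : ∀ r : ZMod n, 2 * r = 0 → Equiv.addRight r ∈ H)
    (hrefl : ∀ c : ZMod n, 2 * c = 1 - k → Equiv.subLeft c ∈ H) :
    checkboardStabilizer k n ≤ H := by
  intro ρ hρ
  rcases mem_dihedral_iff.1 hρ.1 with ⟨r, rfl⟩ | ⟨c, rfl⟩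
  · exact hrot r (two_mul_eq_zero_of_addRight_mem hn hk hkn hρ)
  · exact hrefl c (two_mul_eq_one_sub_of_subLeft_mem hn hk hkn hρ)

end Stabilizer

section Generators

variable {n k : ℕ} {H : Subgroup (Equiv.Perm (ZMod n))}

lemma addRight_mem_of_two_mul_eq_zero [NeZero n]
    (hH : Equiv.addRight (1 : ZMod n) ^ (n / 2) ∈ H) {r : ZMod n} (hr : 2 * r = 0) :
    Equiv.addRight r ∈ H := by
  rcases eq_zero_or_eq_half_of_two_mul_eq_zero hr with rfl | rfl
  · exact Equiv.addRight_zero (α := ZMod n) ▸ one_mem H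
  · exact addRight_one_pow (n := n) _ ▸ hH

lemma subLeft_mem_of_two_mul_eq_two_mul {c c₀ : ZMod n}
    (hrot : ∀ r : ZMod n, 2 * r = 0 → Equiv.addRight r ∈ H) (hc₀ : Equiv.subLeft c₀ ∈ H)
    (hc : 2 * c = 2 * c₀) : Equiv.subLeft c ∈ H := by
  rw [← sub_add_cancel c c₀, ← addRight_mul_subLeft]
  exact mul_mem (hrot _ (by linear_combination hc)) hc₀

theorem checkboardStabilizer_eq_closure_of_even_of_even (hn : 5 ≤ n) (hk : 2 ≤ k)
    (hkn : k + 2 ≤ n) (hk_even : Even k) (hn_even : Even n) :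
    checkboardStabilizer k n = Subgroup.closure {Equiv.addRight (1 : ZMod n) ^ (n / 2)} := by
  have : NeZero n := ⟨by omega⟩
  apply le_antisymm
  · refine checkboardStabilizer_le hn hk hkn (fun r => addRight_mem_of_two_mul_eq_zero ?_)
      fun c hc => (two_mul_ne_one_sub_of_even hn_even hk_even c hc).elim
    exact Subgroup.mem_closure_singleton_self _
  · rw [Subgroup.closure_le, Set.singleton_subset_iff, addRight_one_pow]
    exact addRight_half_mem_checkboardStabilizer (by omega) hn_even

theorem checkboardStabilizer_eq_closure_of_odd_of_even (hn : 5 ≤ n) (hk : 2 ≤ k)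
    (hkn : k + 2 ≤ n) (hk_odd : Odd k) (hn_even : Even n) :
    checkboardStabilizer k n = Subgroup.closure {Equiv.addRight (1 : ZMod n) ^ (n / 2),
      Equiv.subLeft (((k - 1) * (n - 1) / 2 : ℕ) : ZMod n)} := by
  have : NeZero n := ⟨by omega⟩
  apply le_antisymm
  · have hcenter := two_mul_natCast_half_mul (n := n) (k := k) (by omega) (by omega)
      ((Nat.Odd.sub_odd hk_odd odd_one).mul_right _)
    have hrot (r : ZMod n) (hr : 2 * r = 0) := addRight_mem_of_two_mul_eq_zero
      (Subgroup.subset_closure (Set.mem_insert _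
        {Equiv.subLeft (((k - 1) * (n - 1) / 2 : ℕ) : ZMod n)})) hr
    refine checkboardStabilizer_le hn hk hkn hrot fun c hc => ?_
    exact subLeft_mem_of_two_mul_eq_two_mul hrot (Subgroup.subset_closure (by simp))
      (hc.trans hcenter.symm)
  · rw [Subgroup.closure_le, Set.insert_subset_iff, Set.singleton_subset_iff, addRight_one_pow]
    exact ⟨addRight_half_mem_checkboardStabilizer (by omega) hn_even,
      subLeft_half_mem_checkboardStabilizer (by omega) (by omega) (.inl hk_odd)⟩

theorem checkboardStabilizer_eq_closure_of_odd (hn : 5 ≤ n) (hk : 2 ≤ k) (hkn : k + 2 ≤ n)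
    (hn_odd : Odd n) :
    checkboardStabilizer k n =
      Subgroup.closure {Equiv.subLeft (((k - 1) * (n - 1) / 2 : ℕ) : ZMod n)} := by
  apply le_antisymm
  · have hcenter := two_mul_natCast_half_mul (n := n) (k := k) (by omega) (by omega)
      ((Nat.Odd.sub_odd hn_odd odd_one).mul_left _)
    refine checkboardStabilizer_le hn hk hkn (fun r hr => ?_) fun c hc => ?_
    · rw [eq_of_two_mul_eq_two_mul hn_odd (hr.trans (mul_zero 2).symm), Equiv.addRight_zero]
      exact one_mem _
    · rw [eq_of_two_mul_eq_two_mul hn_odd (hc.trans hcenter.symm)]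
      exact Subgroup.mem_closure_singleton_self _
  · rw [Subgroup.closure_le, Set.singleton_subset_iff]
    exact subLeft_half_mem_checkboardStabilizer (by omega) (by omega) (.inr hn_odd)

end Generators

/-- the stabilizer of the checkboard collection in `D_n`. -/
theorem checkboard_stabilizer
    (n k : ℕ) (hn : 5 ≤ n) (hk : 2 ≤ k) (hkn : k ≤ n - 2) :
    (k % 2 = 0 → n % 2 = 0 →
      {ρ : Equiv.Perm (ZMod n) | ρ ∈ dihedral n ∧ (Cch k n).image (fun I => I.image ρ) = Cch k n}
        = ↑(Subgroup.closure {(Equiv.addRight (1 : ZMod n)) ^ (n / 2)})) ∧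
    (k % 2 = 1 → n % 2 = 0 →
      {ρ : Equiv.Perm (ZMod n) | ρ ∈ dihedral n ∧ (Cch k n).image (fun I => I.image ρ) = Cch k n}
        = ↑(Subgroup.closure {(Equiv.addRight (1 : ZMod n)) ^ (n / 2),
            Equiv.subLeft ((((k - 1) * (n - 1)) / 2 : ℕ) : ZMod n)})) ∧
    (n % 2 = 1 →
      {ρ : Equiv.Perm (ZMod n) | ρ ∈ dihedral n ∧ (Cch k n).image (fun I => I.image ρ) = Cch k n}
        = ↑(Subgroup.closure {Equiv.subLeft ((((k - 1) * (n - 1)) / 2 : ℕ) : ZMod n)})) := by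
  have hkn' : k + 2 ≤ n := by omega
  simp only [← coe_checkboardStabilizer, SetLike.coe_set_eq, ← Nat.even_iff, ← Nat.odd_iff]
  exact ⟨checkboardStabilizer_eq_closure_of_even_of_even hn hk hkn',
    checkboardStabilizer_eq_closure_of_odd_of_even hn hk hkn',
    checkboardStabilizer_eq_closure_of_odd hn hk hkn'⟩
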